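/- Under the same hypotheses (commuting pairs (H₁⁰,H₂⁰), (H₁,H₂) with H_j − H_j⁰ ∈ B₂(𝓗), and finite-dimensional commuting approximants H_j^{0(N)}, H_j^{(N)} with projections P_N⁰, P_N from the Weyl–von Neumann–Berg construction), for all integers k, l ≥ 1: lim_{N→∞} Tr{ P_N⁰[(H₂⁰)^k − (H₂)^k] P_N [(H₁)^l − (H₁⁰)^l] P_N⁰ } = lim_{N→∞} Tr{ P_N⁰[(H₂^{0(N)})^k − (H₂^{(N)})^k] P_N [(H₁^{(N)})^l − (H₁^{0(N)})^l] P_N⁰ } (both limits exist and are equal). -/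

import Mathlib

open MeasureTheory Filter Topology

noncomputable section

/-- The trace computed along a Hilbert basis: `Tr T = Σ_i ⟪b i, T (b i)⟫`. -/
def traceAlong {H : Type*} [NormedAddCommGroup H] [InnerProductSpace ℂ H] [CompleteSpace H]
    {ι : Type*} (b : HilbertBasis ι ℂ H) (T : H →L[ℂ] H) : ℂ :=
  ∑' i, (inner ℂ (b i) (T (b i)) : ℂ)

/-- The Schatten `p`-norm `‖T‖_p = (Tr |T|^p)^{1/p}`, via the functional calculus
`|T|^p = f(T*T)`, `f(t) = |t|^{p/2}`, with the trace computed along the basis `b`. -/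
def schattenNorm {H : Type*} [NormedAddCommGroup H] [InnerProductSpace ℂ H] [CompleteSpace H]
    {ι : Type*} (b : HilbertBasis ι ℂ H) (p : ℝ) (T : H →L[ℂ] H) : ℝ :=
  (∑' i, (inner ℂ (b i)
      ((cfc (fun t : ℝ => |t| ^ (p / 2)) (ContinuousLinearMap.adjoint T * T)) (b i)) : ℂ).re)
    ^ (1 / p)

/-!
In Hilbert–Schmidt norm `P_N⁰ X P_N → X` for every Hilbert–Schmidt operator `X`, and
`(A, B) ↦ Tr (A B)` is continuous. Each of the two traces is `Tr (S_N T_N)` with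
`S_N = P_N⁰ [⋯] P_N` and `T_N = P_N [⋯] P_N⁰`, because `P_N² = P_N`. The differences of powers
`X = (H₂⁰)^k - (H₂)^k` and `Y = (H₁)^l - (H₁⁰)^l` are Hilbert–Schmidt, so the first trace tends to
`Tr (X Y)`. Since `P_N` commutes with `H_j^{(N)}`, the hypotheses give `P_N (H_j - H_j^{(N)}) → 0`
in Hilbert–Schmidt norm, and by induction the same for powers; hence the factors `S_N`, `T_N` of the
second trace have the same limits `X` and `Y`.
-/

section Preliminaries

open scoped ENNReal

theorem tendsto_zero_of_le_add {α : Type*} {l : Filter α} {f g h : α → ℝ≥0∞}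
    (hg : Tendsto g l (𝓝 0)) (hh : Tendsto h l (𝓝 0)) (hle : ∀ n, f n ≤ g n + h n) :
    Tendsto f l (𝓝 0) :=
  tendsto_of_tendsto_of_tendsto_of_le_of_le tendsto_const_nhds (by simpa using hg.add hh)
    (fun _ => zero_le) hle

theorem commute_of_isSelfAdjoint_of_mul_mul_eq {R : Type*} [Semigroup R] [StarMul R] {p a : R}
    (hp : IsSelfAdjoint p) (ha : IsSelfAdjoint a) (h : p * a * p = a * p) : Commute p a := by
  have h_star : p * a * p = p * a := by
    simpa only [star_mul, hp.star_eq, ha.star_eq, mul_assoc] using congrArg star h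
  exact h_star.symm.trans h

/-- `c ^ k` occurs on the right only in the differences `p * (a ^ k - c ^ k)`, so that the identity
bounds powers of `c` without any bound on `c` itself. -/
theorem proj_mul_pow_succ_sub_pow_succ {R : Type*} [Ring R] {p c : R} (hp : IsIdempotentElem p)
    (hpc : Commute p c) (a : R) (k : ℕ) :
    p * (a ^ (k + 1) - c ^ (k + 1)) = p * (a ^ k - c ^ k) * a + p * (a ^ k * (p * (a - c)))
      - p * (a ^ k - c ^ k) * (p * (a - c)) := by
  have insert_proj : p * c ^ k = p * c ^ k * p := by
    rw [mul_assoc, ← (hpc.pow_right k).eq, ← mul_assoc, hp.eq]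
  calc p * (a ^ (k + 1) - c ^ (k + 1))
      = p * (a ^ k - c ^ k) * a + p * c ^ k * (a - c) := by
        rw [pow_succ, pow_succ]
        noncomm_ring
    _ = p * (a ^ k - c ^ k) * a + p * c ^ k * p * (a - c) := by rw [← insert_proj]
    _ = _ := by noncomm_ring

end Preliminaries

section HilbertSchmidt

open scoped ENNReal InnerProductSpace

variable {𝕜 E ι α : Type*} [RCLike 𝕜] [NormedAddCommGroup E] [InnerProductSpace 𝕜 E]

/-- The Hilbert–Schmidt norm of `T`, computed along the Hilbert basis `b`. It takes values in
`ℝ≥0∞`, so that `hsNorm b T ≠ ⊤` says that `T` is a Hilbert–Schmidt operator. -/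
def hsNorm (b : HilbertBasis ι 𝕜 E) (T : E →L[𝕜] E) : ℝ≥0∞ :=
  (∑' i, ‖T (b i)‖ₑ ^ 2) ^ (1 / 2 : ℝ)

section Basic

variable (b : HilbertBasis ι 𝕜 E) (S T : E →L[𝕜] E)

theorem hsNorm_sq : hsNorm b T ^ 2 = ∑' i, ‖T (b i)‖ₑ ^ 2 := by
  rw [hsNorm, ← ENNReal.rpow_two, ← ENNReal.rpow_mul]
  norm_num

@[simp]
theorem hsNorm_zero : hsNorm b 0 = 0 := by
  simp [hsNorm]

@[simp]
theorem hsNorm_neg : hsNorm b (-T) = hsNorm b T := by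
  simp [hsNorm]

theorem hsNorm_sub_comm : hsNorm b (S - T) = hsNorm b (T - S) := by
  rw [← neg_sub, hsNorm_neg]

theorem hsNorm_add_le : hsNorm b (S + T) ≤ hsNorm b S + hsNorm b T := by
  let _ : MeasurableSpace ι := ⊤
  have minkowski := ENNReal.lintegral_Lp_add_le (μ := Measure.count) (p := 2)
    (f := fun i => ‖S (b i)‖ₑ) (g := fun i => ‖T (b i)‖ₑ)
    measurable_from_top.aemeasurable measurable_from_top.aemeasurable one_le_two
  simp only [lintegral_count, ENNReal.rpow_two, Pi.add_apply] at minkowski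
  refine le_trans ?_ minkowski
  unfold hsNorm
  gcongr
  exact enorm_add_le _ _

theorem hsNorm_sub_le : hsNorm b (S - T) ≤ hsNorm b S + hsNorm b T := by
  simpa only [sub_eq_add_neg, hsNorm_neg] using hsNorm_add_le b S (-T)

variable {b S T}

theorem hsNorm_add_ne_top (hS : hsNorm b S ≠ ⊤) (hT : hsNorm b T ≠ ⊤) : hsNorm b (S + T) ≠ ⊤ :=
  ne_top_of_le_ne_top (ENNReal.add_ne_top.2 ⟨hS, hT⟩) (hsNorm_add_le b S T)

theorem hsNorm_sub_ne_top (hS : hsNorm b S ≠ ⊤) (hT : hsNorm b T ≠ ⊤) : hsNorm b (S - T) ≠ ⊤ :=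
  ne_top_of_le_ne_top (ENNReal.add_ne_top.2 ⟨hS, hT⟩) (hsNorm_sub_le b S T)

theorem hsNorm_sum_ne_top {κ : Type*} (s : Finset κ) {T : κ → E →L[𝕜] E}
    (hT : ∀ k ∈ s, hsNorm b (T k) ≠ ⊤) : hsNorm b (∑ k ∈ s, T k) ≠ ⊤ :=
  Finset.sum_induction _ (hsNorm b · ≠ ⊤) (fun _ _ => hsNorm_add_ne_top) (by simp) hT

theorem hsNorm_le_mul_of_enorm_le {C : ℝ≥0∞} (h : ∀ i, ‖S (b i)‖ₑ ≤ C * ‖T (b i)‖ₑ) :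
    hsNorm b S ≤ C * hsNorm b T := by
  refine (ENNReal.pow_le_pow_left_iff two_ne_zero).1 ?_
  rw [mul_pow, hsNorm_sq, hsNorm_sq, ← ENNReal.tsum_mul_left]
  gcongr with i
  rw [← mul_pow]
  gcongr
  exact h i

variable (b S T) in
theorem hsNorm_mul_le_enorm_mul : hsNorm b (S * T) ≤ ‖S‖ₑ * hsNorm b T :=
  hsNorm_le_mul_of_enorm_le fun _ => S.le_opENorm _

theorem hsNorm_mul_ne_top_of_right (hT : hsNorm b T ≠ ⊤) : hsNorm b (S * T) ≠ ⊤ :=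
  ne_top_of_le_ne_top (ENNReal.mul_ne_top enorm_ne_top hT) (hsNorm_mul_le_enorm_mul b S T)

theorem hsNorm_ne_top_iff_summable : hsNorm b T ≠ ⊤ ↔ Summable fun i => ‖T (b i)‖ ^ 2 := by
  have h_sq : hsNorm b T ≠ ⊤ ↔ hsNorm b T ^ 2 ≠ ⊤ := by simp
  have h_coe : ∑' i, ‖T (b i)‖ₑ ^ 2 = ∑' i, ((‖T (b i)‖₊ ^ 2 : NNReal) : ℝ≥0∞) := by
    simp [enorm_eq_nnnorm]
  rw [h_sq, hsNorm_sq, h_coe, ENNReal.tsum_coe_ne_top_iff_summable, ← NNReal.summable_coe]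
  simp

theorem hsNorm_eq_ofReal_sqrt (hT : Summable fun i => ‖T (b i)‖ ^ 2) :
    hsNorm b T = ENNReal.ofReal √(∑' i, ‖T (b i)‖ ^ 2) := by
  rw [Real.sqrt_eq_rpow, ← ENNReal.ofReal_rpow_of_nonneg (tsum_nonneg fun i => sq_nonneg _)
    (by norm_num), ENNReal.ofReal_tsum_of_nonneg (fun i => sq_nonneg _) hT]
  simp only [hsNorm, ENNReal.ofReal_pow (norm_nonneg _), ofReal_norm]

theorem eventually_hsNorm_ne_top {l : Filter α} {S : α → E →L[𝕜] E} {S' : E →L[𝕜] E}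
    (hS : Tendsto (fun n => hsNorm b (S n - S')) l (𝓝 0)) (hS' : hsNorm b S' ≠ ⊤) :
    ∀ᶠ n in l, hsNorm b (S n) ≠ ⊤ := by
  filter_upwards [hS.eventually_ne ENNReal.zero_ne_top] with n hn
  simpa using hsNorm_add_ne_top hn hS'

/-- Dominated convergence, with dominating series `∑ i, (C * ‖X (b i)‖) ^ 2`. -/
theorem tendsto_hsNorm_mul_of_tendsto_apply {l : Filter α} {T : α → E →L[𝕜] E} {C : ℝ}
    (hbound : ∀ n, ‖T n‖ ≤ C) (hT : ∀ x, Tendsto (fun n => T n x) l (𝓝 0))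
    {X : E →L[𝕜] E} (hX : hsNorm b X ≠ ⊤) :
    Tendsto (fun n => hsNorm b (T n * X)) l (𝓝 0) := by
  have hle : ∀ n i, ‖(T n * X) (b i)‖ ^ 2 ≤ C ^ 2 * ‖X (b i)‖ ^ 2 := fun n i => by
    rw [← mul_pow]
    gcongr
    exact (T n).le_of_opNorm_le (hbound n) _
  have hsum : Summable fun i => C ^ 2 * ‖X (b i)‖ ^ 2 :=
    (hsNorm_ne_top_iff_summable.1 hX).mul_left _
  have hlim : Tendsto (fun n => ∑' i, ‖(T n * X) (b i)‖ ^ 2) l (𝓝 (∑' _ : ι, (0 : ℝ))) := by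
    refine tendsto_tsum_of_dominated_convergence hsum (fun i => ?_)
      (Eventually.of_forall fun n i => by simpa using hle n i)
    simpa using (hT (X (b i))).norm.pow 2
  have hTX : ∀ n, hsNorm b (T n * X) = ENNReal.ofReal √(∑' i, ‖(T n * X) (b i)‖ ^ 2) := fun n =>
    hsNorm_eq_ofReal_sqrt (hsum.of_nonneg_of_le (fun _ => sq_nonneg _) (hle n))
  simp_rw [hTX]
  simpa using ENNReal.tendsto_ofReal hlim.sqrt

end Basic

section Parseval

theorem enorm_inner_le_enorm (x y : E) : ‖⟪x, y⟫_𝕜‖ₑ ≤ ‖x‖ₑ * ‖y‖ₑ := by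
  simp only [enorm_eq_nnnorm]
  exact_mod_cast nnnorm_inner_le_nnnorm x y

theorem enorm_inner_symm (x y : E) : ‖⟪x, y⟫_𝕜‖ₑ = ‖⟪y, x⟫_𝕜‖ₑ := by
  rw [← ofReal_norm, ← ofReal_norm, norm_inner_symm]

theorem tsum_enorm_inner_sq (b : HilbertBasis ι 𝕜 E) (x : E) :
    ∑' i, ‖⟪b i, x⟫_𝕜‖ₑ ^ 2 = ‖x‖ₑ ^ 2 := by
  have hasSum_sq : HasSum (fun i => ‖⟪b i, x⟫_𝕜‖ ^ 2) (‖x‖ ^ 2) := by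
    have h := RCLike.hasSum_re 𝕜 (b.hasSum_inner_mul_inner x x)
    simpa only [inner_mul_symm_re_eq_norm, norm_mul, norm_inner_symm x, ← sq,
      inner_self_eq_norm_sq] using h
  have h := ENNReal.ofReal_tsum_of_nonneg (fun i => sq_nonneg _) hasSum_sq.summable
  rw [hasSum_sq.tsum_eq] at h
  simpa [ENNReal.ofReal_pow] using h.symm

theorem hsNorm_rankOne (b : HilbertBasis ι 𝕜 E) (x y : E) :
    hsNorm b (InnerProductSpace.rankOne 𝕜 x y) = ‖x‖ₑ * ‖y‖ₑ := by
  refine (ENNReal.pow_right_strictMono two_ne_zero).injective ?_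
  simp only [hsNorm_sq, InnerProductSpace.rankOne_apply, enorm_smul, mul_pow,
    ENNReal.tsum_mul_right, enorm_inner_symm y, tsum_enorm_inner_sq]
  rw [mul_comm]

end Parseval

variable [CompleteSpace E]

section Adjoint

variable (b : HilbertBasis ι 𝕜 E) (S T : E →L[𝕜] E)

/-- Both sides are the square root of the sum of all `‖⟪b i, T (b j)⟫‖ ^ 2`. -/
theorem hsNorm_star : hsNorm b (star T) = hsNorm b T := by
  unfold hsNorm
  congr 1
  simp_rw [← tsum_enorm_inner_sq b]
  rw [ENNReal.tsum_comm]
  refine tsum_congr fun i => tsum_congr fun j => ?_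
  rw [ContinuousLinearMap.star_eq_adjoint, ContinuousLinearMap.adjoint_inner_right,
    enorm_inner_symm]

theorem hsNorm_mul_le_mul_enorm : hsNorm b (S * T) ≤ hsNorm b S * ‖T‖ₑ := by
  rw [← hsNorm_star b (S * T), star_mul, ← hsNorm_star b S, mul_comm, ← ofReal_norm,
    ← norm_star T, ofReal_norm]
  exact hsNorm_mul_le_enorm_mul b (star T) (star S)

theorem enorm_apply_le_hsNorm_mul (x : E) : ‖T x‖ₑ ≤ hsNorm b T * ‖x‖ₑ := by
  refine (ENNReal.pow_le_pow_left_iff two_ne_zero).1 ?_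
  rw [mul_pow, ← hsNorm_star, hsNorm_sq, ← tsum_enorm_inner_sq b, ← ENNReal.tsum_mul_right]
  gcongr with i
  rw [← ContinuousLinearMap.adjoint_inner_left, ← mul_pow]
  gcongr
  exact enorm_inner_le_enorm _ _

theorem hsNorm_mul_le : hsNorm b (S * T) ≤ hsNorm b S * hsNorm b T :=
  hsNorm_le_mul_of_enorm_le fun _ => enorm_apply_le_hsNorm_mul b S _

variable {b S T}

theorem hsNorm_mul_ne_top_of_left (hS : hsNorm b S ≠ ⊤) : hsNorm b (S * T) ≠ ⊤ :=
  ne_top_of_le_ne_top (ENNReal.mul_ne_top hS enorm_ne_top) (hsNorm_mul_le_mul_enorm b S T)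

variable (b) in
theorem hsNorm_ne_top_of_finiteDimensional_range (T : E →L[𝕜] E)
    [FiniteDimensional 𝕜 (LinearMap.range (T : E →ₗ[𝕜] E))] : hsNorm b T ≠ ⊤ := by
  set U := LinearMap.range (T : E →ₗ[𝕜] E)
  have hU : hsNorm b U.starProjection ≠ ⊤ := by
    rw [(stdOrthonormalBasis 𝕜 U).starProjection_eq_sum_rankOne]
    exact hsNorm_sum_ne_top _ fun k _ => by
      simpa only [hsNorm_rankOne] using ENNReal.mul_ne_top enorm_ne_top enorm_ne_top
  have hT : U.starProjection * T = T :=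
    ContinuousLinearMap.ext fun x =>
      Submodule.starProjection_eq_self_iff.2 (LinearMap.mem_range_self _ x)
  rw [← hT]
  exact hsNorm_mul_ne_top_of_left hU

theorem hsNorm_pow_sub_pow_ne_top (h : hsNorm b (S - T) ≠ ⊤) (k : ℕ) :
    hsNorm b (S ^ k - T ^ k) ≠ ⊤ := by
  induction k with
  | zero => simp
  | succ k ih =>
    have telescope : S ^ (k + 1) - T ^ (k + 1) = (S ^ k - T ^ k) * S + T ^ k * (S - T) := by
      rw [pow_succ, pow_succ]
      noncomm_ring
    rw [telescope]
    exact hsNorm_add_ne_top (hsNorm_mul_ne_top_of_left ih) (hsNorm_mul_ne_top_of_right h)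

end Adjoint

section Projection

variable {b : HilbertBasis ι 𝕜 E} {l : Filter α}

theorem hsNorm_proj_mul_le {P : E →L[𝕜] E} (hP : IsStarProjection P) (T : E →L[𝕜] E) :
    hsNorm b (P * T) ≤ hsNorm b T := by
  refine (hsNorm_mul_le_enorm_mul b P T).trans (mul_le_of_le_one_left' ?_)
  simpa [← ofReal_norm] using hP.norm_le

theorem hsNorm_mul_proj_le {P : E →L[𝕜] E} (hP : IsStarProjection P) (T : E →L[𝕜] E) :
    hsNorm b (T * P) ≤ hsNorm b T := by
  rw [← hsNorm_star b (T * P), star_mul, hP.isSelfAdjoint.star_eq, ← hsNorm_star b T]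
  exact hsNorm_proj_mul_le hP _

variable {P Q : α → E →L[𝕜] E} {X : E →L[𝕜] E}

theorem tendsto_hsNorm_proj_mul_sub (hP : ∀ n, IsStarProjection (P n))
    (hPlim : ∀ x, Tendsto (fun n => P n x) l (𝓝 x)) (hX : hsNorm b X ≠ ⊤) :
    Tendsto (fun n => hsNorm b (P n * X - X)) l (𝓝 0) := by
  have hcompl : ∀ x, Tendsto (fun n => (1 - P n) x) l (𝓝 0) := fun x => by
    simpa using (hPlim x).const_sub x
  refine (tendsto_hsNorm_mul_of_tendsto_apply (fun n => (hP n).one_sub.norm_le) hcompl hX).congr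
    fun n => ?_
  rw [sub_mul, one_mul, hsNorm_sub_comm]

theorem tendsto_hsNorm_mul_proj_sub (hP : ∀ n, IsStarProjection (P n))
    (hPlim : ∀ x, Tendsto (fun n => P n x) l (𝓝 x)) (hX : hsNorm b X ≠ ⊤) :
    Tendsto (fun n => hsNorm b (X * P n - X)) l (𝓝 0) := by
  have h := tendsto_hsNorm_proj_mul_sub hP hPlim (X := star X) (by rwa [hsNorm_star])
  refine h.congr fun n => ?_
  rw [← hsNorm_star, star_sub, star_mul, star_star, (hP n).isSelfAdjoint.star_eq]

theorem tendsto_hsNorm_proj_mul_mul_proj_sub (hP : ∀ n, IsStarProjection (P n))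
    (hPlim : ∀ x, Tendsto (fun n => P n x) l (𝓝 x)) (hQ : ∀ n, IsStarProjection (Q n))
    (hQlim : ∀ x, Tendsto (fun n => Q n x) l (𝓝 x)) (hX : hsNorm b X ≠ ⊤) :
    Tendsto (fun n => hsNorm b (P n * X * Q n - X)) l (𝓝 0) := by
  refine tendsto_zero_of_le_add (tendsto_hsNorm_mul_proj_sub hQ hQlim hX)
    (tendsto_hsNorm_proj_mul_sub hP hPlim hX) fun n => ?_
  calc hsNorm b (P n * X * Q n - X)
      = hsNorm b (P n * (X * Q n - X) + (P n * X - X)) := by congr 1; noncomm_ring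
    _ ≤ hsNorm b (P n * (X * Q n - X)) + hsNorm b (P n * X - X) := hsNorm_add_le b _ _
    _ ≤ hsNorm b (X * Q n - X) + hsNorm b (P n * X - X) := by
      gcongr
      exact hsNorm_proj_mul_le (hP n) _

end Projection

/-- The operators `An n` approximate `A` in Hilbert–Schmidt norm on the ranges of the
projections `P n`: those ranges reduce `An n`, they asymptotically reduce `A`, and the compressions
of `A` to them are asymptotically `An n`. -/
structure IsHSApprox (b : HilbertBasis ι 𝕜 E) (l : Filter α) (P : α → E →L[𝕜] E)
    (A : E →L[𝕜] E) (An : α → E →L[𝕜] E) : Prop where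
  commute : ∀ n, Commute (P n) (An n)
  tendsto_commutator : Tendsto (fun n => hsNorm b (A * P n - P n * A)) l (𝓝 0)
  tendsto_compression : Tendsto (fun n => hsNorm b (P n * A * P n - An n * P n)) l (𝓝 0)

namespace IsHSApprox

variable {b : HilbertBasis ι 𝕜 E} {l : Filter α} {P Q : α → E →L[𝕜] E} {A B : E →L[𝕜] E}
  {An Bn : α → E →L[𝕜] E}

theorem star (h : IsHSApprox b l P A An) (hP : ∀ n, IsStarProjection (P n)) :
    IsHSApprox b l P (star A) (fun n => star (An n)) where
  commute n := by
    simpa only [(hP n).isSelfAdjoint.star_eq] using (h.commute n).star_star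
  tendsto_commutator := h.tendsto_commutator.congr fun n => by
    rw [← hsNorm_star, star_sub, star_mul, star_mul, (hP n).isSelfAdjoint.star_eq,
      hsNorm_sub_comm]
  tendsto_compression := h.tendsto_compression.congr fun n => by
    rw [← (h.commute n).eq, ← hsNorm_star]
    simp only [star_sub, star_mul, (hP n).isSelfAdjoint.star_eq, mul_assoc]

theorem tendsto_proj_mul_sub (h : IsHSApprox b l P A An) (hP : ∀ n, IsStarProjection (P n)) :
    Tendsto (fun n => hsNorm b (P n * (A - An n))) l (𝓝 0) := by
  refine tendsto_zero_of_le_add h.tendsto_compression h.tendsto_commutator fun n => ?_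
  have split : P n * (A - An n)
      = (P n * A * P n - An n * P n) - P n * (A * P n - P n * A) := by
    rw [← (h.commute n).eq, mul_sub, mul_sub, ← mul_assoc (P n) (P n),
      (hP n).isIdempotentElem.eq]
    noncomm_ring
  rw [split]
  exact (hsNorm_sub_le b _ _).trans (by gcongr; exact hsNorm_proj_mul_le (hP n) _)

theorem tendsto_proj_mul_pow_sub_pow (h : IsHSApprox b l P A An)
    (hP : ∀ n, IsStarProjection (P n)) (k : ℕ) :
    Tendsto (fun n => hsNorm b (P n * (A ^ k - An n ^ k))) l (𝓝 0) := by
  induction k with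
  | zero => simpa using tendsto_const_nhds
  | succ k ih =>
    have hD := h.tendsto_proj_mul_sub hP
    have main_bound : Tendsto (fun n => hsNorm b (P n * (A ^ k - An n ^ k)) * ‖A‖ₑ
        + ‖A ^ k‖ₑ * hsNorm b (P n * (A - An n))) l (𝓝 0) := by
      simpa using (ENNReal.Tendsto.mul_const ih (.inr enorm_ne_top)).add
        (ENNReal.Tendsto.const_mul hD (.inr enorm_ne_top))
    have error_bound : Tendsto (fun n => hsNorm b (P n * (A ^ k - An n ^ k))
        * hsNorm b (P n * (A - An n))) l (𝓝 0) := by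
      simpa using ENNReal.Tendsto.mul ih (.inr ENNReal.zero_ne_top) hD (.inr ENNReal.zero_ne_top)
    refine tendsto_zero_of_le_add main_bound error_bound fun n => ?_
    rw [proj_mul_pow_succ_sub_pow_succ (hP n).isIdempotentElem (h.commute n)]
    refine (hsNorm_sub_le b _ _).trans (add_le_add ((hsNorm_add_le b _ _).trans
      (add_le_add (hsNorm_mul_le_mul_enorm b _ _) ?_)) (hsNorm_mul_le b _ _))
    exact (hsNorm_proj_mul_le (hP n) _).trans (hsNorm_mul_le_enorm_mul b _ _)

theorem tendsto_pow_sub_pow_mul_proj (h : IsHSApprox b l P A An)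
    (hP : ∀ n, IsStarProjection (P n)) (k : ℕ) :
    Tendsto (fun n => hsNorm b ((A ^ k - An n ^ k) * P n)) l (𝓝 0) := by
  refine ((h.star hP).tendsto_proj_mul_pow_sub_pow hP k).congr fun n => ?_
  rw [← hsNorm_star b ((A ^ k - An n ^ k) * P n)]
  simp only [star_mul, star_sub, star_pow, (hP n).isSelfAdjoint.star_eq]

theorem tendsto_proj_mul_pow_sub_pow_mul_proj (hA : IsHSApprox b l P A An)
    (hB : IsHSApprox b l Q B Bn) (hP : ∀ n, IsStarProjection (P n))
    (hPlim : ∀ x, Tendsto (fun n => P n x) l (𝓝 x)) (hQ : ∀ n, IsStarProjection (Q n))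
    (hQlim : ∀ x, Tendsto (fun n => Q n x) l (𝓝 x)) (hAB : hsNorm b (A - B) ≠ ⊤) (k : ℕ) :
    Tendsto (fun n => hsNorm b (P n * (An n ^ k - Bn n ^ k) * Q n - (A ^ k - B ^ k)))
      l (𝓝 0) := by
  have compressed := tendsto_hsNorm_proj_mul_mul_proj_sub hP hPlim hQ hQlim
    (hsNorm_pow_sub_pow_ne_top hAB k)
  have errorA := hA.tendsto_proj_mul_pow_sub_pow hP k
  have errorB := hB.tendsto_pow_sub_pow_mul_proj hQ k
  refine tendsto_zero_of_le_add compressed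
    (tendsto_zero_of_le_add errorB errorA fun _ => le_rfl) fun n => ?_
  have split : P n * (An n ^ k - Bn n ^ k) * Q n - (A ^ k - B ^ k)
      = (P n * (A ^ k - B ^ k) * Q n - (A ^ k - B ^ k))
        + (P n * ((B ^ k - Bn n ^ k) * Q n) - P n * (A ^ k - An n ^ k) * Q n) := by
    noncomm_ring
  rw [split]
  refine (hsNorm_add_le b _ _).trans (add_le_add le_rfl ((hsNorm_sub_le b _ _).trans ?_))
  exact add_le_add (hsNorm_proj_mul_le (hP n) _) (hsNorm_mul_proj_le (hQ n) _)

end IsHSApprox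

end HilbertSchmidt

section Trace

open scoped ENNReal InnerProductSpace

variable {H ι α : Type*} [NormedAddCommGroup H] [InnerProductSpace ℂ H] [CompleteSpace H]
  {b : HilbertBasis ι ℂ H} {l : Filter α}

theorem tsum_enorm_inner_mul_apply_le (b : HilbertBasis ι ℂ H) (S T : H →L[ℂ] H) :
    ∑' i, ‖⟪b i, (S * T) (b i)⟫_ℂ‖ₑ ≤ hsNorm b S * hsNorm b T := by
  let _ : MeasurableSpace ι := ⊤
  have hoelder := ENNReal.lintegral_mul_le_Lp_mul_Lq Measure.count Real.HolderConjugate.two_two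
    (f := fun i => ‖star S (b i)‖ₑ) (g := fun i => ‖T (b i)‖ₑ)
    measurable_from_top.aemeasurable measurable_from_top.aemeasurable
  simp only [lintegral_count, ENNReal.rpow_two, Pi.mul_apply] at hoelder
  rw [← hsNorm_star b S]
  refine le_trans (ENNReal.tsum_le_tsum fun i => ?_) hoelder
  rw [mul_apply_eq_comp, ← ContinuousLinearMap.adjoint_inner_left]
  exact enorm_inner_le_enorm _ _

theorem enorm_traceAlong_mul_le (b : HilbertBasis ι ℂ H) (S T : H →L[ℂ] H) :
    ‖traceAlong b (S * T)‖ₑ ≤ hsNorm b S * hsNorm b T :=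
  enorm_tsum_le_tsum_enorm.trans (tsum_enorm_inner_mul_apply_le b S T)

theorem summable_inner_mul_apply {S T : H →L[ℂ] H} (hS : hsNorm b S ≠ ⊤) (hT : hsNorm b T ≠ ⊤) :
    Summable fun i => ⟪b i, (S * T) (b i)⟫_ℂ := by
  have h := ne_top_of_le_ne_top (ENNReal.mul_ne_top hS hT) (tsum_enorm_inner_mul_apply_le b S T)
  simp only [enorm_eq_nnnorm] at h
  exact (ENNReal.tsum_coe_ne_top_iff_summable.1 h).of_nnnorm

theorem traceAlong_sub {S T : H →L[ℂ] H} (hS : Summable fun i => ⟪b i, S (b i)⟫_ℂ)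
    (hT : Summable fun i => ⟪b i, T (b i)⟫_ℂ) :
    traceAlong b (S - T) = traceAlong b S - traceAlong b T := by
  simpa only [traceAlong, sub_apply, inner_sub_right] using hS.tsum_sub hT

theorem enorm_traceAlong_mul_sub_le {S T S' T' : H →L[ℂ] H} (hS : hsNorm b S ≠ ⊤)
    (hT : hsNorm b T ≠ ⊤) (hS' : hsNorm b S' ≠ ⊤) (hT' : hsNorm b T' ≠ ⊤) :
    ‖traceAlong b (S * T) - traceAlong b (S' * T')‖ₑ
      ≤ hsNorm b (S - S') * hsNorm b T + hsNorm b S' * hsNorm b (T - T') := by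
  have split : traceAlong b (S * T) - traceAlong b (S' * T')
      = traceAlong b ((S - S') * T) + traceAlong b (S' * (T - T')) := by
    rw [sub_mul, mul_sub, traceAlong_sub (summable_inner_mul_apply hS hT)
      (summable_inner_mul_apply hS' hT), traceAlong_sub (summable_inner_mul_apply hS' hT)
      (summable_inner_mul_apply hS' hT'), sub_add_sub_cancel]
  rw [split]
  exact (enorm_add_le _ _).trans
    (add_le_add (enorm_traceAlong_mul_le b _ _) (enorm_traceAlong_mul_le b _ _))

theorem tendsto_traceAlong_mul {S T : α → H →L[ℂ] H} {S' T' : H →L[ℂ] H}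
    (hS : Tendsto (fun n => hsNorm b (S n - S')) l (𝓝 0)) (hS' : hsNorm b S' ≠ ⊤)
    (hT : Tendsto (fun n => hsNorm b (T n - T')) l (𝓝 0)) (hT' : hsNorm b T' ≠ ⊤) :
    Tendsto (fun n => traceAlong b (S n * T n)) l (𝓝 (traceAlong b (S' * T'))) := by
  rw [tendsto_iff_edist_tendsto_0]
  have bound : Tendsto (fun n => hsNorm b (S n - S') * (hsNorm b (T n - T') + hsNorm b T')
      + hsNorm b S' * hsNorm b (T n - T')) l (𝓝 0) := by
    simpa using (ENNReal.Tendsto.mul hS (.inr (by simpa using hT')) (hT.add_const _)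
      (.inr ENNReal.zero_ne_top)).add (ENNReal.Tendsto.const_mul hT (.inr hS'))
  refine tendsto_of_tendsto_of_tendsto_of_le_of_le' tendsto_const_nhds bound
    (Eventually.of_forall fun _ => zero_le) ?_
  filter_upwards [eventually_hsNorm_ne_top hS hS', eventually_hsNorm_ne_top hT hT'] with n hSn hTn
  rw [edist_eq_enorm_sub]
  refine (enorm_traceAlong_mul_sub_le hSn hTn hS' hT').trans ?_
  gcongr
  simpa using hsNorm_add_le b (T n - T') T'

end Trace

section Schatten

variable {H ι α : Type*} [NormedAddCommGroup H] [InnerProductSpace ℂ H] [CompleteSpace H]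
  {b : HilbertBasis ι ℂ H} {l : Filter α}

theorem cfc_abs_rpow_two_div_two {T : H →L[ℂ] H} (hT : 0 ≤ T) :
    cfc (fun t : ℝ => |t| ^ (2 / 2 : ℝ)) T = T := by
  have hTsa : IsSelfAdjoint T := .of_nonneg hT
  conv_rhs => rw [← cfc_id' ℝ T]
  refine cfc_congr fun t ht => ?_
  simp [abs_of_nonneg (spectrum_nonneg_of_nonneg hT ht)]

/-- Both sides are `0` when the series diverges. -/
theorem schattenNorm_two (b : HilbertBasis ι ℂ H) (T : H →L[ℂ] H) :
    schattenNorm b 2 T = √(∑' i, ‖T (b i)‖ ^ 2) := by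
  have h_inner : ∀ x, (inner ℂ x ((ContinuousLinearMap.adjoint T * T) x)).re = ‖T x‖ ^ 2 :=
    fun x => (T.apply_norm_sq_eq_inner_adjoint_right x).symm
  have h_nonneg : 0 ≤ ContinuousLinearMap.adjoint T * T := star_mul_self_nonneg T
  rw [schattenNorm, cfc_abs_rpow_two_div_two h_nonneg, Real.sqrt_eq_rpow]
  simp_rw [h_inner]

theorem hsNorm_eq_ofReal_schattenNorm {T : H →L[ℂ] H} (hT : hsNorm b T ≠ ⊤) :
    hsNorm b T = ENNReal.ofReal (schattenNorm b 2 T) := by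
  rw [schattenNorm_two, hsNorm_eq_ofReal_sqrt (hsNorm_ne_top_iff_summable.1 hT)]

theorem tendsto_hsNorm_of_tendsto_schattenNorm {T : α → H →L[ℂ] H}
    (hT : ∀ n, hsNorm b (T n) ≠ ⊤) (h : Tendsto (fun n => schattenNorm b 2 (T n)) l (𝓝 0)) :
    Tendsto (fun n => hsNorm b (T n)) l (𝓝 0) := by
  simp_rw [fun n => hsNorm_eq_ofReal_schattenNorm (hT n)]
  simpa using ENNReal.tendsto_ofReal h

theorem IsHSApprox.of_schattenNorm {P An : α → H →L[ℂ] H} {A : H →L[ℂ] H}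
    (hPsa : ∀ n, IsSelfAdjoint (P n))
    (hPfin : ∀ n, FiniteDimensional ℂ (LinearMap.range (P n : H →ₗ[ℂ] H)))
    (hAnsa : ∀ n, IsSelfAdjoint (An n)) (hinv : ∀ n, P n * An n * P n = An n * P n)
    (hcomm : Tendsto (fun n => schattenNorm b 2 (A * P n - P n * A)) l (𝓝 0))
    (hcompr : Tendsto (fun n => schattenNorm b 2 (P n * A * P n - An n * P n)) l (𝓝 0)) :
    IsHSApprox b l P A An := by
  have hPtop : ∀ n, hsNorm b (P n) ≠ ⊤ := fun n => hsNorm_ne_top_of_finiteDimensional_range b _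
  exact {
    commute := fun n => commute_of_isSelfAdjoint_of_mul_mul_eq (hPsa n) (hAnsa n) (hinv n)
    tendsto_commutator := tendsto_hsNorm_of_tendsto_schattenNorm (fun n => hsNorm_sub_ne_top
      (hsNorm_mul_ne_top_of_right (hPtop n)) (hsNorm_mul_ne_top_of_left (hPtop n))) hcomm
    tendsto_compression := tendsto_hsNorm_of_tendsto_schattenNorm (fun n => hsNorm_sub_ne_top
      (hsNorm_mul_ne_top_of_right (hPtop n)) (hsNorm_mul_ne_top_of_right (hPtop n))) hcompr }

end Schatten

theorem stmt16_general {H ι α : Type*} [NormedAddCommGroup H] [InnerProductSpace ℂ H]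
    [CompleteSpace H] {b : HilbertBasis ι ℂ H} {f : Filter α} {H10 H20 H1 H2 : H →L[ℂ] H}
    (hV1 : hsNorm b (H1 - H10) ≠ ⊤) (hV2 : hsNorm b (H2 - H20) ≠ ⊤) {P0 P : α → H →L[ℂ] H}
    (hP0 : ∀ n, IsStarProjection (P0 n)) (hP0lim : ∀ x, Tendsto (fun n => P0 n x) f (𝓝 x))
    (hP : ∀ n, IsStarProjection (P n)) (hPlim : ∀ x, Tendsto (fun n => P n x) f (𝓝 x))
    {H10n H20n H1n H2n : α → H →L[ℂ] H}
    (h10 : IsHSApprox b f P0 H10 H10n) (h20 : IsHSApprox b f P0 H20 H20n)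
    (h1 : IsHSApprox b f P H1 H1n) (h2 : IsHSApprox b f P H2 H2n) (k l : ℕ) :
    Tendsto (fun n => traceAlong b (P0 n * (H20 ^ k - H2 ^ k) * P n * (H1 ^ l - H10 ^ l) * P0 n))
        f (𝓝 (traceAlong b ((H20 ^ k - H2 ^ k) * (H1 ^ l - H10 ^ l)))) ∧
      Tendsto (fun n => traceAlong b (P0 n * (H20n n ^ k - H2n n ^ k) * P n *
          (H1n n ^ l - H10n n ^ l) * P0 n))
        f (𝓝 (traceAlong b ((H20 ^ k - H2 ^ k) * (H1 ^ l - H10 ^ l)))) := by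
  have hV2' : hsNorm b (H20 - H2) ≠ ⊤ := by rwa [hsNorm_sub_comm]
  have hX := hsNorm_pow_sub_pow_ne_top hV2' k
  have hY := hsNorm_pow_sub_pow_ne_top hV1 l
  have double_proj : ∀ n X Y, P0 n * X * P n * (P n * Y * P0 n) = P0 n * X * P n * Y * P0 n :=
    fun n X Y => by
      simp only [← mul_assoc, (hP n).isIdempotentElem.mul_mul_self]
  constructor
  · simpa only [double_proj] using tendsto_traceAlong_mul
      (tendsto_hsNorm_proj_mul_mul_proj_sub hP0 hP0lim hP hPlim hX) hX
      (tendsto_hsNorm_proj_mul_mul_proj_sub hP hPlim hP0 hP0lim hY) hY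
  · simpa only [double_proj] using tendsto_traceAlong_mul
      (h20.tendsto_proj_mul_pow_sub_pow_mul_proj h2 hP0 hP0lim hP hPlim hV2' k) hX
      (h1.tendsto_proj_mul_pow_sub_pow_mul_proj h10 hP hPlim hP0 hP0lim hV1 l) hY

/-- Under the same hypotheses, for all `k, l ≥ 1` the limits
`lim_N Tr{P_N⁰[(H₂⁰)^k − (H₂)^k] P_N [(H₁)^l − (H₁⁰)^l] P_N⁰}` and
`lim_N Tr{P_N⁰[(H₂^{0(N)})^k − (H₂^{(N)})^k] P_N [(H₁^{(N)})^l − (H₁^{0(N)})^l] P_N⁰}`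
both exist and are equal. -/
theorem stmt16
 {H : Type*} [NormedAddCommGroup H] [InnerProductSpace ℂ H] [CompleteSpace H]
    [TopologicalSpace.SeparableSpace H]
    (b : HilbertBasis ℕ ℂ H)
    (H10 H20 H1 H2 : H →L[ℂ] H)
    (h10sa : IsSelfAdjoint H10) (h20sa : IsSelfAdjoint H20)
    (h1sa : IsSelfAdjoint H1) (h2sa : IsSelfAdjoint H2)
    (hcomm0 : Commute H10 H20) (hcomm : Commute H1 H2)
    (hV1 : Summable fun i => ‖(H1 - H10) (b i)‖ ^ 2)
    (hV2 : Summable fun i => ‖(H2 - H20) (b i)‖ ^ 2)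
    (P0 P : ℕ → H →L[ℂ] H)
    (hP0proj : ∀ N, P0 N * P0 N = P0 N) (hP0sa : ∀ N, IsSelfAdjoint (P0 N))
    (hP0fin : ∀ N, FiniteDimensional ℂ (LinearMap.range (P0 N : H →ₗ[ℂ] H)))
    (hP0mono : ∀ N, LinearMap.range (P0 N : H →ₗ[ℂ] H)
      ≤ LinearMap.range (P0 (N + 1) : H →ₗ[ℂ] H))
    (hP0lim : ∀ x : H, Tendsto (fun N => P0 N x) atTop (𝓝 x))
    (hPproj : ∀ N, P N * P N = P N) (hPsa : ∀ N, IsSelfAdjoint (P N))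
    (hPfin : ∀ N, FiniteDimensional ℂ (LinearMap.range (P N : H →ₗ[ℂ] H)))
    (hPmono : ∀ N, LinearMap.range (P N : H →ₗ[ℂ] H)
      ≤ LinearMap.range (P (N + 1) : H →ₗ[ℂ] H))
    (hPlim : ∀ x : H, Tendsto (fun N => P N x) atTop (𝓝 x))
    (H10N H20N H1N H2N : ℕ → H →L[ℂ] H)
    (h10Nsa : ∀ N, IsSelfAdjoint (H10N N)) (h20Nsa : ∀ N, IsSelfAdjoint (H20N N))
    (h1Nsa : ∀ N, IsSelfAdjoint (H1N N)) (h2Nsa : ∀ N, IsSelfAdjoint (H2N N))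
    (hcomm0N : ∀ N, Commute (H10N N) (H20N N)) (hcommN : ∀ N, Commute (H1N N) (H2N N))
    (hsub0 : ∀ N, P0 N * H10N N * P0 N = H10N N * P0 N
      ∧ P0 N * H20N N * P0 N = H20N N * P0 N)
    (hsub : ∀ N, P N * H1N N * P N = H1N N * P N ∧ P N * H2N N * P N = H2N N * P N)
    (happrox0 : ∀ p : ℝ, 2 ≤ p →
      Tendsto (fun N => schattenNorm b p (H10 * P0 N - P0 N * H10)) atTop (𝓝 0) ∧
      Tendsto (fun N => schattenNorm b p (H20 * P0 N - P0 N * H20)) atTop (𝓝 0) ∧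
      Tendsto (fun N => schattenNorm b p (P0 N * H10 * P0 N - H10N N * P0 N)) atTop (𝓝 0) ∧
      Tendsto (fun N => schattenNorm b p (P0 N * H20 * P0 N - H20N N * P0 N)) atTop (𝓝 0))
    (happrox : ∀ p : ℝ, 2 ≤ p →
      Tendsto (fun N => schattenNorm b p (H1 * P N - P N * H1)) atTop (𝓝 0) ∧
      Tendsto (fun N => schattenNorm b p (H2 * P N - P N * H2)) atTop (𝓝 0) ∧
      Tendsto (fun N => schattenNorm b p (P N * H1 * P N - H1N N * P N)) atTop (𝓝 0) ∧
      Tendsto (fun N => schattenNorm b p (P N * H2 * P N - H2N N * P N)) atTop (𝓝 0))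
    : ∀ k l : ℕ, 1 ≤ k → 1 ≤ l → ∃ L : ℂ,
      Tendsto (fun N =>
          traceAlong b (P0 N * (H20 ^ k - H2 ^ k) * P N * (H1 ^ l - H10 ^ l) * P0 N))
        atTop (𝓝 L) ∧
      Tendsto (fun N =>
          traceAlong b (P0 N * (H20N N ^ k - H2N N ^ k) * P N *
            (H1N N ^ l - H10N N ^ l) * P0 N))
        atTop (𝓝 L) := by
  intro k l _ _
  obtain ⟨comm10, comm20, compr10, compr20⟩ := happrox0 2 le_rfl
  obtain ⟨comm1, comm2, compr1, compr2⟩ := happrox 2 le_rfl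
  exact ⟨_, stmt16_general (hsNorm_ne_top_iff_summable.2 hV1) (hsNorm_ne_top_iff_summable.2 hV2)
    (fun N => ⟨hP0proj N, hP0sa N⟩) hP0lim (fun N => ⟨hPproj N, hPsa N⟩) hPlim
    (.of_schattenNorm hP0sa hP0fin h10Nsa (fun N => (hsub0 N).1) comm10 compr10)
    (.of_schattenNorm hP0sa hP0fin h20Nsa (fun N => (hsub0 N).2) comm20 compr20)
    (.of_schattenNorm hPsa hPfin h1Nsa (fun N => (hsub N).1) comm1 compr1)
    (.of_schattenNorm hPsa hPfin h2Nsa (fun N => (hsub N).2) comm2 compr2) k l⟩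

end
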